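/- arXiv:2502.17285 — 2 statements merged into one kernel-verified Lean document; each statement's English description precedes it below -/
import Mathlib

section
/- Let (G,c,o) be an infinite recurrent rooted network, let y_n be a sequence of vertices with y_n → ∞ (leaving every finite set), and suppose the Green densities g_o(·,y_n) converge pointwise to a function h:V→[0,∞). Then h is a potential on (G,c,o). -/
open scoped ENNReal
open Filter Topology Classical
noncomputable section

/-- A rooted network: a connected, locally finite simple graph with positive
symmetric edge conductances (extended by `0` to non-edges) and a root `o`. -/
structure RootedNetwork (V : Type*) where
  G : SimpleGraph V
  locallyFinite : ∀ x : V, (G.neighborSet x).Finite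
  connected : G.Connected
  c : V → V → ℝ
  c_symm : ∀ x y, c x y = c y x
  c_pos : ∀ x y, G.Adj x y → 0 < c x y
  c_eq_zero : ∀ x y, ¬ G.Adj x y → c x y = 0
  o : V

namespace RootedNetwork

variable {V : Type*}

/-- The vertex weight `c_x = Σ_{z ∼ x} c_{xz}`. -/
noncomputable def cv (N : RootedNetwork V) (x : V) : ℝ := ∑' y, N.c x y

/-- The transition probability `p(x,y) = c_{xy} / c_x` of the network random walk. -/
noncomputable def p (N : RootedNetwork V) (x y : V) : ℝ≥0∞ :=
  ENNReal.ofReal (N.c x y / N.cv x)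

/-- The probability that the network random walk started at `x` begins with the
given finite sequence of steps. -/
noncomputable def pathProb (N : RootedNetwork V) : V → List V → ℝ≥0∞
  | _, [] => 1
  | x, y :: l => N.p x y * pathProb N y l

/-- The probability, starting from `x`, that the walk ever visits `b`
(`P_x(τ_b < ∞)`), computed by decomposing over the finite path up to the first
visit of `b`. -/
noncomputable def hitProb (N : RootedNetwork V) (x b : V) : ℝ≥0∞ :=
  if x = b then 1
  else ∑' l : {l : List V // l.getLast? = some b ∧ b ∉ l.dropLast}, N.pathProb x l.1

/-- A rooted network is recurrent if the walk started from any vertex almost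
surely visits the root `o`. -/
def Recurrent (N : RootedNetwork V) : Prop := ∀ x : V, N.hitProb x N.o = 1

/-- The Green kernel `G_o(x,y) = Σ_{n ≥ 0} P_x(X_n = y, τ_o > n)` of the walk
killed at the root, computed as a sum over finite paths from `x` to `y`
avoiding `o` (the `n = 0` term is the first summand). -/
noncomputable def GreenKer (N : RootedNetwork V) (x y : V) : ℝ≥0∞ :=
  (if x = y ∧ x ≠ N.o then 1 else 0) +
    ∑' l : {l : List V // l.getLast? = some y ∧ N.o ∉ x :: l}, N.pathProb x l.1

/-- The Green density `g_o(x,y) = G_o(x,y) / c_y`. -/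
noncomputable def greenDensity (N : RootedNetwork V) (x y : V) : ℝ≥0∞ :=
  N.GreenKer x y / ENNReal.ofReal (N.cv y)

/-- The network Laplacian `Δ f (v) = Σ_{x ∼ v} c_{vx} (f(x) - f(v))`. -/
noncomputable def lap (N : RootedNetwork V) (f : V → ℝ) (v : V) : ℝ :=
  ∑' x, N.c v x * (f x - f v)

/-- A potential: a nonnegative function vanishing at `o`, with Laplacian `1`
at `o`, harmonic everywhere else. -/
def IsPotential (N : RootedNetwork V) (h : V → ℝ) : Prop :=
  (∀ v, 0 ≤ h v) ∧ h N.o = 0 ∧ N.lap h N.o = 1 ∧ ∀ v, v ≠ N.o → N.lap h v = 0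

end RootedNetwork

namespace RootedNetwork

variable {V : Type*}

/-- Real weighted sums restricted to neighbours. -/
def nb (N : RootedNetwork V) (x : V) : Finset V := (N.locallyFinite x).toFinset

lemma mem_nb (N : RootedNetwork V) (x z : V) : z ∈ N.nb x ↔ N.G.Adj x z := by
  simp [nb]

lemma c_off (N : RootedNetwork V) (x z : V) (hz : z ∉ N.nb x) : N.c x z = 0 :=
  N.c_eq_zero x z (by rwa [← mem_nb])

lemma c_nonneg (N : RootedNetwork V) (x z : V) : 0 ≤ N.c x z := by
  by_cases hz : N.G.Adj x z
  · exact (N.c_pos x z hz).le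
  · exact (N.c_eq_zero x z hz).ge

lemma cv_eq (N : RootedNetwork V) (x : V) : N.cv x = ∑ z ∈ N.nb x, N.c x z :=
  tsum_eq_sum (fun z hz => N.c_off x z hz)

lemma cv_pos [Infinite V] (N : RootedNetwork V) (x : V) : 0 < N.cv x := by
  obtain ⟨z, hz⟩ := N.connected.preconnected.exists_adj_of_nontrivial x
  rw [cv_eq]
  exact Finset.sum_pos' (fun z _ => N.c_nonneg x z)
    ⟨z, (N.mem_nb x z).2 hz, N.c_pos x z hz⟩

lemma cv_mul_p [Infinite V] (N : RootedNetwork V) (x z : V) :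
    ENNReal.ofReal (N.cv x) * N.p x z = ENNReal.ofReal (N.c x z) := by
  rw [p, ← ENNReal.ofReal_mul (N.cv_pos x).le, mul_div_cancel₀ _ (N.cv_pos x).ne']

lemma pathProb_append (N : RootedNetwork V) (m : List V) (x z w : V) :
    N.pathProb x (m ++ [z] ++ [w]) = N.pathProb x (m ++ [z]) * N.p z w := by
  induction m generalizing x with
  | nil => simp [pathProb]
  | cons a m ih =>
    simp only [List.cons_append, pathProb]
    rw [ih, mul_assoc]

lemma reversal [Infinite V] (N : RootedNetwork V) (m : List V) (x y : V) :
    ENNReal.ofReal (N.cv x) * N.pathProb x (m ++ [y]) =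
      ENNReal.ofReal (N.cv y) * N.pathProb y (m.reverse ++ [x]) := by
  induction m generalizing x with
  | nil => simp [pathProb, cv_mul_p, N.c_symm x y]
  | cons z m ih =>
    rw [List.reverse_cons, pathProb_append, ← mul_assoc, ← ih z]
    simp only [List.cons_append, pathProb]
    rw [← mul_assoc, cv_mul_p, N.c_symm x z, ← cv_mul_p]
    ring

lemma tsum_list (f : List V → ℝ≥0∞) :
    ∑' l, f l = f [] + ∑' z, ∑' l, f (z :: l) := by
  have e : ∑' l, f l = ∑' s : Option (V × List V), f (s.elim [] (fun q => q.1 :: q.2)) := by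
    let E : Option (V × List V) ≃ List V :=
      { toFun := fun s => s.elim [] (fun q => q.1 :: q.2)
        invFun := fun l => match l with
          | [] => none
          | z :: l => some (z, l)
        left_inv := by rintro (_ | ⟨z, l⟩) <;> rfl
        right_inv := by rintro (_ | ⟨z, l⟩) <;> rfl }
    exact (E.tsum_eq f).symm
  rw [e, ← (Equiv.optionEquivSumPUnit.{0} (V × List V)).symm.tsum_eq,
    ENNReal.summable.tsum_sum ENNReal.summable, ← ENNReal.tsum_prod, add_comm]
  simp

lemma tsum_last (b : V) (P : List V → Prop) (f : List V → ℝ≥0∞)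
    [∀ l : List V, Decidable (l.getLast? = some b ∧ P l)] [∀ l : List V, Decidable (P (l ++ [b]))] :
    ∑' l : List V, (if l.getLast? = some b ∧ P l then f l else 0) =
      ∑' l : List V, (if P (l ++ [b]) then f (l ++ [b]) else 0) := by
  have hi : Function.Injective (fun l : List V => l ++ [b]) := List.append_left_injective [b]
  rw [← hi.tsum_eq (f := fun l => if l.getLast? = some b ∧ P l then f l else 0)]
  · simp
  · intro l hl
    have : l.getLast? = some b := by
      by_contra hc
      simp [hc] at hl
    obtain ⟨l', rfl⟩ := List.getLast?_eq_some_iff.1 this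
    exact ⟨l', rfl⟩

lemma tsum_sub (P : List V → Prop) (f : List V → ℝ≥0∞) [∀ l, Decidable (P l)] :
    ∑' l : {l : List V // P l}, f l.1 = ∑' l, if P l then f l else 0 := by
  have := tsum_subtype {l | P l} f
  simp only [Set.indicator_apply, Set.mem_ofPred_eq] at this
  convert this using 1
  rfl

lemma green_eq (N : RootedNetwork V) (x y : V) :
    N.GreenKer x y = ∑' l : List V,
      if (x :: l).getLast? = some y ∧ N.o ∉ x :: l then N.pathProb x l else 0 := by
  rw [GreenKer, tsum_sub (fun l => l.getLast? = some y ∧ N.o ∉ x :: l), tsum_list,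
    tsum_list (fun l => if (x :: l).getLast? = some y ∧ N.o ∉ x :: l then N.pathProb x l else 0)]
  simp [pathProb, List.getLast?_cons_cons, eq_comm]

lemma green_o (N : RootedNetwork V) (y : V) : N.GreenKer N.o y = 0 := by
  rw [green_eq]; simp

lemma green_step (N : RootedNetwork V) (x y : V) (hx : x ≠ N.o) :
    N.GreenKer x y = (if x = y then 1 else 0) + ∑' z, N.p x z * N.GreenKer z y := by
  rw [green_eq, tsum_list]
  congr 1
  · simp [pathProb, hx.symm]
  · refine tsum_congr fun z => ?_
    rw [green_eq, ← ENNReal.tsum_mul_left]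
    refine tsum_congr fun l => ?_
    simp [hx.symm, pathProb]

lemma green_root [Infinite V] (N : RootedNetwork V) (hrec : N.Recurrent) (y : V) (hy : y ≠ N.o) :
    ∑' z, ENNReal.ofReal (N.c N.o z) * N.GreenKer z y = ENNReal.ofReal (N.cv y) := by
  have h1 := hrec y
  rw [hitProb, if_neg hy, tsum_sub (fun l => l.getLast? = some N.o ∧ N.o ∉ l.dropLast),
    tsum_last N.o (fun l => N.o ∉ l.dropLast)] at h1
  have h2 : ∑' z, ENNReal.ofReal (N.c N.o z) * N.GreenKer z y =
      ENNReal.ofReal (N.cv N.o) *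
        ∑' l : List V, if l.getLast? = some y ∧ N.o ∉ l then N.pathProb N.o l else 0 := by
    rw [tsum_list]
    simp only [List.getLast?_nil, reduceCtorEq, false_and, if_false, zero_add]
    rw [← ENNReal.tsum_mul_left]
    refine tsum_congr fun z => ?_
    rw [green_eq, ← cv_mul_p, mul_assoc, ← ENNReal.tsum_mul_left]
    congr 1
    refine tsum_congr fun l => ?_
    simp [pathProb]
  rw [h2, tsum_last y (fun l => N.o ∉ l), ← mul_one (ENNReal.ofReal (N.cv y)), ← h1,
    ← ENNReal.tsum_mul_left, ← ENNReal.tsum_mul_left,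
    ← (List.reverse_involutive (α := V)).toPerm.tsum_eq]
  refine tsum_congr fun l => ?_
  have := N.reversal l.reverse N.o y
  simp only [List.reverse_reverse] at this
  simp [hy.symm, this]

lemma green_ne_top [Infinite V] (N : RootedNetwork V) (hrec : N.Recurrent) (x y : V)
    (hy : y ≠ N.o) : N.GreenKer x y ≠ ⊤ := by
  have key : ∀ a b, N.G.Adj a b → N.GreenKer a y ≠ ⊤ → N.GreenKer b y ≠ ⊤ := by
    intro a b hab ha hb
    have hc : ENNReal.ofReal (N.c a b) ≠ 0 := by simpa using N.c_pos a b hab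
    have hS : ∑' z, ENNReal.ofReal (N.c a z) * N.GreenKer z y = ⊤ := by
      refine ENNReal.tsum_eq_top_of_eq_top ⟨b, ?_⟩
      rw [hb, ENNReal.mul_top hc]
    by_cases hao : a = N.o
    · subst hao
      rw [N.green_root hrec y hy] at hS
      exact ENNReal.ofReal_ne_top hS
    · simp_rw [← cv_mul_p, mul_assoc] at hS
      rw [ENNReal.tsum_mul_left] at hS
      rw [N.green_step a y hao] at ha
      exact ENNReal.mul_ne_top ENNReal.ofReal_ne_top (ENNReal.add_ne_top.1 ha).2 hS
  obtain ⟨w⟩ := N.connected.preconnected N.o x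
  have : ∀ a b, N.G.Walk a b → N.GreenKer a y ≠ ⊤ → N.GreenKer b y ≠ ⊤ := by
    intro a b w
    induction w with
    | nil => exact id
    | cons hab _ ih => exact fun ha => ih (key _ _ hab ha)
  exact this _ _ w (by simp [green_o])

lemma real_sum [Infinite V] (N : RootedNetwork V) (hrec : N.Recurrent) (x y : V)
    (hy : y ≠ N.o) :
    (∑' z, ENNReal.ofReal (N.c x z) * N.GreenKer z y).toReal =
      N.cv y * ∑ z ∈ N.nb x, N.c x z * (N.greenDensity z y).toReal := by
  rw [tsum_eq_sum (s := N.nb x) (fun z hz => by simp [N.c_off x z hz]),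
    ENNReal.toReal_sum (fun z _ =>
      ENNReal.mul_ne_top ENNReal.ofReal_ne_top (N.green_ne_top hrec z y hy)),
    Finset.mul_sum]
  refine Finset.sum_congr rfl fun z _ => ?_
  have := (N.cv_pos y).ne'
  rw [greenDensity, ENNReal.toReal_mul, ENNReal.toReal_div,
    ENNReal.toReal_ofReal (N.c_nonneg x z), ENNReal.toReal_ofReal (N.cv_pos y).le]
  field_simp

lemma lap_eq (N : RootedNetwork V) (h : V → ℝ) (v : V) :
    N.lap h v = ∑ z ∈ N.nb v, N.c v z * h z - N.cv v * h v := by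
  rw [lap, tsum_eq_sum (s := N.nb v) (fun z hz => by simp [N.c_off v z hz]), cv_eq,
    Finset.sum_mul, ← Finset.sum_sub_distrib]
  exact Finset.sum_congr rfl fun z _ => by ring

end RootedNetwork

/-- On an infinite recurrent rooted network, any pointwise limit of Green
densities `g_o(·, y_n)` along a sequence of vertices leaving every finite set
is a potential. -/
theorem isPotential_of_greenDensity_limit {V : Type*} [Infinite V]
    (N : RootedNetwork V) (hrec : N.Recurrent)
    (y : ℕ → V) (hy : ∀ S : Set V, S.Finite → ∀ᶠ n in atTop, y n ∉ S)
    (h : V → ℝ) (hnn : ∀ v, 0 ≤ h v)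
    (hconv : ∀ x : V,
      Tendsto (fun n => (N.greenDensity x (y n)).toReal) atTop (𝓝 (h x))) :
    N.IsPotential h := by
  have hT : ∀ v, Tendsto (fun n => ∑ z ∈ N.nb v, N.c v z * (N.greenDensity z (y n)).toReal)
      atTop (𝓝 (∑ z ∈ N.nb v, N.c v z * h z)) := fun v =>
    tendsto_finsetSum _ fun z _ => (hconv z).const_mul _
  have h0 : h N.o = 0 := by
    refine tendsto_nhds_unique (hconv N.o) ?_
    simp [RootedNetwork.greenDensity, RootedNetwork.green_o]
  refine ⟨hnn, h0, ?_, fun v hv => ?_⟩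
  · rw [N.lap_eq, h0, mul_zero, sub_zero]
    refine tendsto_nhds_unique (hT N.o) (tendsto_const_nhds.congr' ?_)
    filter_upwards [hy {N.o} (Set.finite_singleton _)] with n hn
    have hn' : y n ≠ N.o := by simpa using hn
    have h1 := N.real_sum hrec N.o (y n) hn'
    rw [N.green_root hrec _ hn', ENNReal.toReal_ofReal (N.cv_pos _).le] at h1
    exact (mul_left_cancel₀ (N.cv_pos (y n)).ne' (by rw [← h1, mul_one])).symm
  · rw [N.lap_eq, sub_eq_zero]
    refine tendsto_nhds_unique (hT v) (((hconv v).const_mul (N.cv v)).congr' ?_)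
    filter_upwards [hy {N.o, v} (by simp)] with n hn
    simp only [Set.mem_insert_iff, Set.mem_singleton_iff, not_or] at hn
    have h1 := N.real_sum hrec v (y n) hn.1
    simp_rw [← RootedNetwork.cv_mul_p, mul_assoc] at h1
    rw [ENNReal.tsum_mul_left] at h1
    have h2 := N.green_step v (y n) hv
    rw [if_neg (fun e => hn.2 e.symm), zero_add] at h2
    rw [← h2, ENNReal.toReal_mul, ENNReal.toReal_ofReal (N.cv_pos _).le] at h1
    have := (N.cv_pos (y n)).ne'
    refine mul_left_cancel₀ this ?_
    rw [← h1, RootedNetwork.greenDensity, ENNReal.toReal_div,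
      ENNReal.toReal_ofReal (N.cv_pos _).le]
    field_simp
end
end

section
/- Let (G,c,o) be a recurrent rooted network. Let r_n → ∞ be a sequence of integers and for each n let η_{r_n} be a probability measure supported on ∂B(o,r_n). Assume that g_o(·,η_{r_n}) := Σ_v η_{r_n}(v) g_o(·,v) converges pointwise to a potential h as n → ∞. Then for any finite path γ=(γ_1,…,γ_k) contained in S_h={u : h(u)>0} with γ_1 ∼ o, one has Σ_v η_{r_n}(v) P_o(oγ | τ_v < τ_o^+) → P^h_{μ_h}(γ) as n → ∞, where P^h_{μ_h}(γ) = c_{oγ_1} h(γ_1) ∏_{i=2}^k p^h(γ_{i-1},γ_i). -/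
open scoped ENNReal
open Filter Topology Classical
noncomputable section

namespace RootedNetwork

variable {V : Type*}

/-- The transition probability `p^h(x,y) = p(x,y) h(y) / h(x)` of the Doob
`h`-process. -/
noncomputable def hp (N : RootedNetwork V) (h : V → ℝ) (x y : V) : ℝ≥0∞ :=
  N.p x y * ENNReal.ofReal (h y / h x)

/-- The probability that the `h`-process started at `x` begins with the given
finite sequence of steps. -/
noncomputable def hPathProb (N : RootedNetwork V) (h : V → ℝ) : V → List V → ℝ≥0∞
  | _, [] => 1
  | x, y :: l => N.hp h x y * hPathProb N h y l

end RootedNetwork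
namespace RootedNetwork

variable {V : Type*}

/-- `P_o(τ_v < τ_o^+)`: the probability that the walk started at `o` hits `v`
before returning to `o`, decomposed over the path up to the first visit of `v`. -/
noncomputable def hitBeforeReturn (N : RootedNetwork V) (v : V) : ℝ≥0∞ :=
  ∑' l : {l : List V // l.getLast? = some v ∧ v ∉ l.dropLast ∧ N.o ∉ l},
    N.pathProb N.o l.1

/-- `P_o(oγ, τ_v < τ_o^+)`: the probability that the walk started at `o` begins
with the steps `γ` and hits `v` before returning to `o`. -/
noncomputable def pathThenHit (N : RootedNetwork V) (γ : List V) (v : V) : ℝ≥0∞ :=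
  ∑' l : {l : List V // γ <+: l ∧ l.getLast? = some v ∧ v ∉ l.dropLast ∧ N.o ∉ l},
    N.pathProb N.o l.1

end RootedNetwork

namespace RootedNetwork

variable {V : Type*}

theorem aux_c_nonneg (N : RootedNetwork V) (x y : V) : 0 ≤ N.c x y := by
  by_cases hxy : N.G.Adj x y
  · exact (N.c_pos x y hxy).le
  · exact (N.c_eq_zero x y hxy).ge

theorem aux_summable (N : RootedNetwork V) (x : V) : Summable (N.c x) := by
  apply summable_of_hasFiniteSupport
  refine (N.locallyFinite x).subset ?_
  intro y hy
  by_contra hxy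
  exact hy (N.c_eq_zero x y hxy)

theorem aux_cv_pos (N : RootedNetwork V) {x y : V} (hxy : N.G.Adj x y) : 0 < N.cv x :=
  (N.aux_summable x).tsum_pos (N.aux_c_nonneg x) y (N.c_pos x y hxy)

theorem aux_cv_pos' (N : RootedNetwork V) {x y : V} (hxy : x ≠ y) : 0 < N.cv x := by
  have : Nontrivial V := ⟨x, y, hxy⟩
  obtain ⟨z, hz⟩ := N.connected.preconnected.exists_adj_of_nontrivial x
  exact N.aux_cv_pos hz

theorem aux_cv_p (N : RootedNetwork V) (x y : V) :
    ENNReal.ofReal (N.cv x) * N.p x y = ENNReal.ofReal (N.c x y) := by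
  have h0 : N.c x y ≤ N.cv x := (N.aux_summable x).le_tsum y (fun j _ => N.aux_c_nonneg x j)
  have h1 := N.aux_c_nonneg x y
  unfold p
  rw [← ENNReal.ofReal_mul (h1.trans h0)]
  congr 1
  by_cases hc : N.cv x = 0
  · rw [hc] at h0 ⊢
    simp; linarith
  · field_simp

theorem aux_pathProb_append (N : RootedNetwork V) (l m : List V) : ∀ x,
    N.pathProb x (l ++ m) = N.pathProb x l * N.pathProb (l.getLastD x) m := by
  induction l with
  | nil => intro x; simp [pathProb]
  | cons a l ih => intro x; simp only [List.cons_append, pathProb, ih, mul_assoc, List.getLastD_cons]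

theorem aux_reverse (N : RootedNetwork V) (y : V) (a : List V) : ∀ x,
    ENNReal.ofReal (N.cv x) * N.pathProb x (a ++ [y]) =
      ENNReal.ofReal (N.cv y) * N.pathProb y (a.reverse ++ [x]) := by
  induction a with
  | nil =>
    intro x
    simp only [List.nil_append, List.reverse_nil, pathProb, mul_one, aux_cv_p]
    rw [N.c_symm]
  | cons b a ih =>
    intro x
    have h1 : N.pathProb y ((b :: a).reverse ++ [x]) =
        N.pathProb y (a.reverse ++ [b]) * N.p b x := by
      rw [List.reverse_cons, aux_pathProb_append]
      simp [pathProb]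
    rw [h1, ← mul_assoc, ← ih b, List.cons_append, pathProb, ← mul_assoc, aux_cv_p, N.c_symm,
      ← aux_cv_p]
    ring

/-- First hitting weight avoiding the root. -/
def auxF (N : RootedNetwork V) (x v : V) : ℝ≥0∞ :=
  ∑' l : {l : List V // l.getLast? = some v ∧ v ∉ l.dropLast ∧ N.o ∉ l}, N.pathProb x l.1

/-- All paths to v avoiding the root. -/
def auxA (N : RootedNetwork V) (x v : V) : ℝ≥0∞ :=
  ∑' l : {l : List V // l.getLast? = some v ∧ N.o ∉ l}, N.pathProb x l.1

theorem aux_F_eq (N : RootedNetwork V) (v : V) : N.hitBeforeReturn v = N.auxF N.o v := rfl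

theorem aux_pathThenHit (N : RootedNetwork V) (γ : List V) (v : V) (hv : v ∉ γ) (ho : N.o ∉ γ) :
    N.pathThenHit γ v = N.pathProb N.o γ * N.auxF (γ.getLastD N.o) v := by
  unfold pathThenHit auxF
  rw [← ENNReal.tsum_mul_left]
  let f : {l : List V // l.getLast? = some v ∧ v ∉ l.dropLast ∧ N.o ∉ l} →
      {l : List V // γ <+: l ∧ l.getLast? = some v ∧ v ∉ l.dropLast ∧ N.o ∉ l} := fun l =>
    ⟨γ ++ l.1, by
      obtain ⟨l, h1, h2, h3⟩ := l
      obtain ⟨a, rfl⟩ := List.getLast?_eq_some_iff.1 h1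
      refine ⟨List.prefix_append _ _, ?_, ?_, ?_⟩
      · rw [← List.append_assoc]; simp
      · rw [← List.append_assoc]
        simp at h2 ⊢
        exact ⟨hv, h2⟩
      · simp at h3 ⊢
        exact ⟨ho, h3⟩⟩
  have hf : Function.Bijective f := by
    constructor
    · intro l m hlm
      apply Subtype.ext
      exact List.append_cancel_left (congrArg Subtype.val hlm)
    · rintro ⟨l, ⟨m, rfl⟩, h1, h2, h3⟩
      have hm : m ≠ [] := by
        rintro rfl
        simp at h1
        exact hv (List.mem_of_getLast? h1)
      obtain ⟨a, w, rfl⟩ : ∃ a w, m = a ++ [w] := ⟨_, _, (List.dropLast_append_getLast hm).symm⟩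
      rw [← List.append_assoc] at h1 h2
      simp at h1 h2 h3
      subst h1
      refine ⟨⟨a ++ [w], ?_, ?_, ?_⟩, rfl⟩
      · simp
      · simpa using h2.2
      · simpa using h3.2
  rw [← (Equiv.ofBijective f hf).tsum_eq]
  refine tsum_congr fun l => ?_
  exact N.aux_pathProb_append γ l.1 N.o

theorem aux_A_eq (N : RootedNetwork V) (x v : V) (hv : v ≠ N.o) :
    N.auxA x v = N.auxF x v * N.GreenKer v v := by
  have hG : N.GreenKer v v = ∑' m : Option {l : List V // l.getLast? = some v ∧ N.o ∉ v :: l},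
      N.pathProb v (m.elim [] Subtype.val) := by
    rw [← (Equiv.optionEquivSumPUnit.{0} _).symm.tsum_eq,
      ENNReal.summable.tsum_sum ENNReal.summable]
    simp [GreenKer, hv, pathProb, add_comm]
  rw [hG]
  unfold auxA auxF
  rw [← ENNReal.tsum_mul_right]
  simp_rw [← ENNReal.tsum_mul_left]
  rw [← ENNReal.tsum_prod]
  let f : {l : List V // l.getLast? = some v ∧ v ∉ l.dropLast ∧ N.o ∉ l} ×
      Option {l : List V // l.getLast? = some v ∧ N.o ∉ v :: l} →
      {l : List V // l.getLast? = some v ∧ N.o ∉ l} := fun q =>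
    ⟨q.1.1 ++ q.2.elim [] Subtype.val, by
      obtain ⟨⟨l, h1, h2, h3⟩, m⟩ := q
      rcases m with _ | ⟨m, h4, h5⟩
      · simp [h1, h3]
      · obtain ⟨b, rfl⟩ := List.getLast?_eq_some_iff.1 h4
        simp at h5
        simp [h3, h5]⟩
  have hf : Function.Bijective f := by
    constructor
    · rintro ⟨⟨l, h1, h2, h3⟩, m⟩ ⟨⟨l', h1', h2', h3'⟩, m'⟩ hlm
      have h := congrArg Subtype.val hlm
      simp only [f] at h
      obtain ⟨a, rfl⟩ := List.getLast?_eq_some_iff.1 h1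
      obtain ⟨a', rfl⟩ := List.getLast?_eq_some_iff.1 h1'
      simp only [List.dropLast_concat] at h2 h2'
      have key : a = a' ∧ m.elim [] Subtype.val = m'.elim [] Subtype.val := by
        generalize m.elim [] Subtype.val = s at h
        generalize m'.elim [] Subtype.val = s' at h
        clear * - h h2 h2'
        simp only [List.append_assoc, List.singleton_append] at h
        induction a generalizing a' with
        | nil =>
          cases a' with
          | nil => simpa using h
          | cons b a' => simp at h h2'; exact absurd h.1 h2'.1
        | cons c a ih =>
          cases a' with
          | nil => simp at h h2; exact absurd h.1.symm h2.1
          | cons b a' =>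
            simp at h h2 h2'
            have := ih a' h2.2 h2'.2 h.2
            exact ⟨by rw [h.1, this.1], this.2⟩
      obtain ⟨rfl, hm⟩ := key
      have : m = m' := by
        rcases m with _ | ⟨m, h4, h5⟩ <;> rcases m' with _ | ⟨m', h4', h5'⟩
        · rfl
        · simp at hm; subst hm; simp at h4'
        · simp at hm; subst hm; simp at h4
        · simp at hm; subst hm; rfl
      subst this
      rfl
    · rintro ⟨l, h1, h2⟩
      obtain ⟨a, b, rfl, ha⟩ := List.eq_append_cons_of_mem (List.mem_of_getLast? h1)
      have h2' := h2
      simp at h2'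
      rcases List.eq_nil_or_concat b with rfl | ⟨b, w, rfl⟩
      · exact ⟨⟨⟨a ++ [v], by simp, by simpa using ha, by simpa using h2'⟩, none⟩,
          Subtype.ext (by simp [f])⟩
      · have hw : w = v := by
          have : (a ++ v :: (b ++ [w])) = (a ++ v :: b) ++ [w] := by simp
          rw [List.concat_eq_append, this, List.getLast?_concat] at h1
          exact Option.some.inj h1
        subst hw
        simp at h2'
        exact ⟨⟨⟨a ++ [w], by simp, by simpa using ha, by simp [h2']⟩,
          some ⟨b ++ [w], by simp, by simp [h2']⟩⟩, Subtype.ext (by simp [f])⟩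
  rw [← (Equiv.ofBijective f hf).tsum_eq]
  refine tsum_congr fun q => ?_
  obtain ⟨⟨l, h1, h2, h3⟩, m⟩ := q
  obtain ⟨a, rfl⟩ := List.getLast?_eq_some_iff.1 h1
  have := N.aux_pathProb_append (a ++ [v]) (m.elim [] Subtype.val) x
  simp only [List.getLastD_concat] at this
  exact this

theorem aux_green (N : RootedNetwork V) (x v : V) (hxv : x ≠ v) (hx : x ≠ N.o) :
    N.GreenKer x v = N.auxA x v := by
  have e : ∀ l : List V, (l.getLast? = some v ∧ N.o ∉ x :: l) ↔
      (l.getLast? = some v ∧ N.o ∉ l) := by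
    intro l; simp [Ne.symm hx]
  unfold GreenKer auxA
  rw [if_neg (by tauto), zero_add]
  exact ((Equiv.subtypeEquivRight e).tsum_eq
    (fun l : {l : List V // l.getLast? = some v ∧ N.o ∉ l} => N.pathProb x l.1))

theorem aux_rev_sum (N : RootedNetwork V) (v : V) (hv : v ≠ N.o) :
    ENNReal.ofReal (N.cv N.o) * N.auxA N.o v = ENNReal.ofReal (N.cv v) * N.hitProb v N.o := by
  unfold auxA hitProb
  rw [if_neg hv, ← ENNReal.tsum_mul_left, ← ENNReal.tsum_mul_left]
  let f : {a : List V // N.o ∉ a} → {l : List V // l.getLast? = some v ∧ N.o ∉ l} := fun a =>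
    ⟨a.1 ++ [v], by simp, by simp [a.2, hv.symm]⟩
  have hf : Function.Bijective f := by
    constructor
    · intro a b hab
      exact Subtype.ext (List.append_cancel_right (congrArg Subtype.val hab))
    · rintro ⟨l, h1, h2⟩
      obtain ⟨a, rfl⟩ := List.getLast?_eq_some_iff.1 h1
      simp at h2
      exact ⟨⟨a, h2.1⟩, rfl⟩
  let g : {a : List V // N.o ∉ a} → {l : List V // l.getLast? = some N.o ∧ N.o ∉ l.dropLast} :=
    fun a => ⟨a.1.reverse ++ [N.o], by simp, by simp [a.2]⟩
  have hg : Function.Bijective g := by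
    constructor
    · intro a b hab
      exact Subtype.ext (List.reverse_injective
        (List.append_cancel_right (congrArg Subtype.val hab)))
    · rintro ⟨l, h1, h2⟩
      obtain ⟨a, rfl⟩ := List.getLast?_eq_some_iff.1 h1
      simp at h2
      exact ⟨⟨a.reverse, by simpa using h2⟩, Subtype.ext (by simp [g])⟩
  rw [← (Equiv.ofBijective f hf).tsum_eq, ← (Equiv.ofBijective g hg).tsum_eq]
  exact tsum_congr fun a => N.aux_reverse v a.1 N.o

theorem aux_ratio (N : RootedNetwork V) (hrec : N.Recurrent) (γ : List V) (v x : V)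
    (hp0 : N.pathProb N.o γ ≠ 0) (hv : v ∉ γ) (ho : N.o ∉ γ) (hvo : v ≠ N.o) (hx : γ.getLast? = some x) :
    N.pathThenHit γ v / N.hitBeforeReturn v =
      N.pathProb N.o γ * ENNReal.ofReal (N.cv N.o) * N.greenDensity x v ∧
      N.greenDensity x v ≠ ⊤ := by
  have hxγ := List.mem_of_getLast? hx
  have hxv : x ≠ v := by rintro rfl; exact hv hxγ
  have hxo : x ≠ N.o := by rintro rfl; exact ho hxγ
  have hl : γ.getLastD N.o = x := by simp [List.getLastD_eq_getLast?, hx]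
  have h1 := N.aux_rev_sum v hvo
  rw [hrec v, mul_one, N.aux_A_eq _ _ hvo] at h1
  have hcv : ENNReal.ofReal (N.cv v) ≠ 0 := by simpa using N.aux_cv_pos' hvo
  have hco : ENNReal.ofReal (N.cv N.o) ≠ 0 := by simpa using N.aux_cv_pos' hvo.symm
  have hF0 : N.auxF N.o v ≠ 0 := by intro h0; rw [h0] at h1; simp at h1; exact hcv (by simp [h1])
  have hG0 : N.GreenKer v v ≠ 0 := by intro h0; rw [h0] at h1; simp at h1; exact hcv (by simp [h1])
  have hFt : N.auxF N.o v ≠ ⊤ := by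
    intro h0; rw [h0, ENNReal.top_mul hG0, ENNReal.mul_top hco] at h1
    exact ENNReal.ofReal_ne_top h1.symm
  have hGt : N.GreenKer v v ≠ ⊤ := by
    intro h0; rw [h0, ENNReal.mul_top hF0, ENNReal.mul_top hco] at h1
    exact ENNReal.ofReal_ne_top h1.symm
  have hE : N.pathThenHit γ v / N.hitBeforeReturn v =
      N.pathProb N.o γ * ENNReal.ofReal (N.cv N.o) * N.greenDensity x v := by
    rw [N.aux_pathThenHit γ v hv ho, N.aux_F_eq, hl, greenDensity, N.aux_green x v hxv hxo,
      N.aux_A_eq _ _ hvo, ← h1,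
      ← ENNReal.mul_div_mul_right _ (N.auxF N.o v)
        (mul_ne_zero hco hG0) (ENNReal.mul_ne_top ENNReal.ofReal_ne_top hGt)]
    simp only [div_eq_mul_inv]
    rw [show N.auxF N.o v * (ENNReal.ofReal (N.cv N.o) * N.GreenKer v v) =
      ENNReal.ofReal (N.cv N.o) * (N.auxF N.o v * N.GreenKer v v) by ring]
    ring
  refine ⟨hE, ?_⟩
  have hle : N.pathThenHit γ v ≤ N.auxF N.o v := by
    refine ENNReal.tsum_comp_le_tsum_of_injective
      (f := fun l : {l : List V // γ <+: l ∧ l.getLast? = some v ∧ v ∉ l.dropLast ∧ N.o ∉ l} =>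
        (⟨l.1, l.2.2⟩ : {l : List V // l.getLast? = some v ∧ v ∉ l.dropLast ∧ N.o ∉ l})) ?_
      (fun l => N.pathProb N.o l.1)
    intro a b hab
    exact Subtype.ext (congrArg Subtype.val hab :)
  rw [N.aux_pathThenHit γ v hv ho, hl] at hle
  have hFx : N.auxF x v ≠ ⊤ := by
    intro h0
    rw [h0, ENNReal.mul_top hp0] at hle
    exact hFt (top_le_iff.1 hle)
  rw [greenDensity, N.aux_green x v hxv hxo, N.aux_A_eq _ _ hvo]
  exact ENNReal.div_ne_top (ENNReal.mul_ne_top hFx hGt) hcv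

theorem aux_pathProb_ne_zero (N : RootedNetwork V) (l : List V) : ∀ x,
    List.IsChain N.G.Adj (x :: l) → N.pathProb x l ≠ 0 := by
  induction l with
  | nil => intro x _; simp [pathProb]
  | cons y l ih =>
    intro x hx
    rw [List.isChain_cons_cons] at hx
    rw [pathProb]
    refine mul_ne_zero ?_ (ih y hx.2)
    simpa [p] using div_pos (N.c_pos x y hx.1) (N.aux_cv_pos hx.1)

theorem aux_pathProb_ne_top (N : RootedNetwork V) (l : List V) : ∀ x,
    N.pathProb x l ≠ ⊤ := by
  induction l with
  | nil => intro x; simp [pathProb]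
  | cons y l ih =>
    intro x
    rw [pathProb]
    exact ENNReal.mul_ne_top ENNReal.ofReal_ne_top (ih y)

theorem aux_telescope (N : RootedNetwork V) (h : V → ℝ) (l : List V) : ∀ x,
    (∀ u ∈ x :: l, 0 < h u) →
    ENNReal.ofReal (h x) * N.hPathProb h x l =
      N.pathProb x l * ENNReal.ofReal (h (l.getLastD x)) := by
  induction l with
  | nil => intro x _; simp [pathProb, hPathProb]
  | cons y l ih =>
    intro x hx
    have hx0 : 0 < h x := hx x (by simp)
    have hy := ih y (fun u hu => hx u (List.mem_cons_of_mem _ hu))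
    have hxy : ENNReal.ofReal (h x) * ENNReal.ofReal (h y / h x) = ENNReal.ofReal (h y) := by
      rw [← ENNReal.ofReal_mul hx0.le]
      congr 1
      field_simp
    rw [hPathProb, pathProb, hp, List.getLastD_cons, mul_assoc (N.p x y) (N.pathProb y l), ← hy,
      ← hxy]
    ring

end RootedNetwork

/-- In a recurrent rooted network, if `η_{r_n}` are probability measures on the
spheres `∂B(o, r_n)` with `r_n → ∞` and `g_o(·, η_{r_n}) → h` pointwise for a
potential `h`, then for any finite path `γ = (γ_1, …, γ_k)` in `S_h` with
`γ_1 ∼ o`, `Σ_v η_{r_n}(v) P_o(oγ | τ_v < τ_o^+) → P^h_{μ_h}(γ)` as `n → ∞`,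
where `P^h_{μ_h}(γ) = c_{oγ_1} h(γ_1) ∏_{i=2}^k p^h(γ_{i-1}, γ_i)`. -/
theorem cond_paths_converge_to_hProcess {V : Type*} (N : RootedNetwork V)
    (hrec : N.Recurrent)
    (r : ℕ → ℕ) (hr : Tendsto r atTop atTop)
    (η : ℕ → V → ℝ)
    (hηnn : ∀ n v, 0 ≤ η n v)
    (hηsupp : ∀ n (v : V), N.G.dist N.o v ≠ r n → η n v = 0)
    (hηsum : ∀ n, (∑' v : V, η n v) = 1)
    (h : V → ℝ) (hpot : N.IsPotential h)
    (hconv : ∀ x : V,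
      Tendsto (fun n => ∑' v : V, η n v * (N.greenDensity x v).toReal)
        atTop (𝓝 (h x)))
    (γ1 : V) (rest : List V)
    (hadj : N.G.Adj N.o γ1) (hchain : List.Chain N.G.Adj γ1 rest)
    (hS : ∀ u ∈ γ1 :: rest, 0 < h u) :
    Tendsto
      (fun n => ∑' v : V, ENNReal.ofReal (η n v) *
        (N.pathThenHit (γ1 :: rest) v / N.hitBeforeReturn v))
      atTop
      (𝓝 (ENNReal.ofReal (N.c N.o γ1 * h γ1) * N.hPathProb h γ1 rest)) := by

  obtain ⟨hh0, hho, -, -⟩ := hpot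
  set γ := γ1 :: rest with hγ
  set x := rest.getLastD γ1 with hx
  have hlast : γ.getLast? = some x := by
    rw [hγ, hx, List.getLast?_cons, List.getLastD_eq_getLast?]
  have hxγ : x ∈ γ := List.mem_of_getLast? hlast
  have ho : N.o ∉ γ := fun hm => by have := hS _ hm; rw [hho] at this; exact lt_irrefl _ this
  have hp0 : N.pathProb N.o γ ≠ 0 :=
    N.aux_pathProb_ne_zero γ N.o (List.isChain_cons_cons.2 ⟨hadj, hchain⟩)
  have hxpos : 0 < h x := hS x hxγ
  set K := N.pathProb N.o γ * ENNReal.ofReal (N.cv N.o) with hK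
  have hKt : K ≠ ⊤ := ENNReal.mul_ne_top (N.aux_pathProb_ne_top γ N.o) ENNReal.ofReal_ne_top
  have htarget : ENNReal.ofReal (N.c N.o γ1 * h γ1) * N.hPathProb h γ1 rest =
      K * ENNReal.ofReal (h x) := by
    rw [ENNReal.ofReal_mul (N.aux_c_nonneg _ _), mul_assoc, N.aux_telescope h rest γ1 hS,
      ← N.aux_cv_p, hK, hγ, RootedNetwork.pathProb]
    ring
  rw [htarget]
  have hlim : Tendsto (fun n => K * ENNReal.ofReal
      (∑' v : V, η n v * (N.greenDensity x v).toReal)) atTop (𝓝 (K * ENNReal.ofReal (h x))) :=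
    ENNReal.Tendsto.const_mul (ENNReal.tendsto_ofReal (hconv x)) (Or.inr hKt)
  refine hlim.congr' ?_
  have hfar : ∀ l : List V, ∀ᶠ n in atTop, ∀ u ∈ l, N.G.dist N.o u ≠ r n := by
    intro l
    induction l with
    | nil => simp
    | cons a l ih =>
      filter_upwards [ih, hr.eventually_gt_atTop (N.G.dist N.o a)] with n h1 h2
      intro u hu
      rcases List.mem_cons.1 hu with rfl | hu
      · exact h2.ne
      · exact h1 u hu
  filter_upwards [hfar (N.o :: γ), (hconv x).eventually_const_lt hxpos] with n hn hpos
  have hsum : Summable (fun v => η n v * (N.greenDensity x v).toReal) := by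
    by_contra hns
    rw [tsum_eq_zero_of_not_summable hns] at hpos
    exact lt_irrefl _ hpos
  rw [ENNReal.ofReal_tsum_of_nonneg
    (fun v => mul_nonneg (hηnn n v) ENNReal.toReal_nonneg) hsum, ← ENNReal.tsum_mul_left]
  refine tsum_congr fun v => ?_
  by_cases hv : v ∈ N.o :: γ
  · rw [hηsupp n v (hn v hv)]; simp
  · rw [List.mem_cons, not_or] at hv
    obtain ⟨h1, h2⟩ := N.aux_ratio hrec γ v x hp0 hv.2 ho hv.1 hlast
    rw [h1, ENNReal.ofReal_mul (hηnn n v), ENNReal.ofReal_toReal h2]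
    ring
end
end
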